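/- arXiv:2410.20452 — 2 statements merged into one kernel-verified Lean document; each statement's English description precedes it below -/
import Mathlib

section
/- For every ν ∈ (0,1) and every u ∈ ℝ \ {0}, the principal value integral (1/π) p.v.∫_{−∞}^{∞} |u'|^{ν−1}/(u' − u) du' exists (as the limit as ε → 0⁺ of the integral over {u' : |u' − u| > ε}) and equals −cot(πν/2) · |u|^{ν−1} · sgn(u). -/
open Real MeasureTheory Filter Set

lemma aux_cot_hasSum (a : ℝ) (h0 : 0 < a) (h1 : a < 1/2) :
    HasSum (fun n : ℕ => 1/((n:ℝ)+a) - 1/((n:ℝ)+1-a)) (π * Real.cot (π * a)) := by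
  have hz : (a : ℂ) ∈ Complex.integerComplement := by
    rintro ⟨m, hm⟩
    have hm' : (m : ℝ) = a := by exact_mod_cast hm
    have h2 : (0:ℝ) < m := by linarith
    have h3 : (m:ℝ) < 1 := by linarith
    have h4 : 0 < m := by exact_mod_cast h2
    have h5 : m < 1 := by exact_mod_cast h3
    omega
  have hc := tendsto_logDeriv_euler_cot_sub hz
  have hr : Tendsto (fun n : ℕ => ∑ j ∈ Finset.range n, (1/(a - ((j:ℝ)+1)) + 1/(a + ((j:ℝ)+1))))
      atTop (nhds (π * Real.cot (π * a) - 1/a)) := by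
    have := (Complex.continuous_re.tendsto _).comp hc
    have e : (π * Complex.cot (π * a) - 1 / a : ℂ) = ((π * Real.cot (π * a) - 1/a : ℝ) : ℂ) := by
      push_cast; rfl
    rw [e, Complex.ofReal_re] at this
    refine this.congr fun n => ?_
    have e2 : (∑ j ∈ Finset.range n, cotTerm (a:ℂ) j) =
      ((∑ j ∈ Finset.range n, (1/(a - ((j:ℝ)+1)) + 1/(a + ((j:ℝ)+1))) : ℝ) : ℂ) := by
      push_cast; rfl
    simp only [Function.comp, e2, Complex.ofReal_re]
  rw [hasSum_iff_tendsto_nat_of_nonneg]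
  · have hl : Tendsto (fun n : ℕ => 1/((n:ℝ)+a)) atTop (nhds 0) := by
      simp_rw [one_div]
      exact tendsto_inv_atTop_zero.comp (tendsto_atTop_add_const_right _ _ tendsto_natCast_atTop_atTop)
    have := (hr.add_const (1/a)).sub hl
    have e : π * Real.cot (π * a) - 1/a + 1/a - 0 = π * Real.cot (π * a) := by ring
    rw [e] at this
    refine this.congr fun n => ?_
    induction n with
    | zero => simp
    | succ n ih =>
      rw [Finset.sum_range_succ, Finset.sum_range_succ, ← ih]
      have e3 : 1/(a - ((n:ℝ)+1)) = - (1/((n:ℝ)+1-a)) := by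
        rw [← neg_sub, one_div, one_div, inv_neg]
      rw [e3]; push_cast
      rw [show (n:ℝ)+1+a = a + (n+1) by ring]
      ring
  · intro n
    have : (0:ℝ) ≤ n := n.cast_nonneg
    rw [sub_nonneg]
    apply one_div_le_one_div_of_le <;> linarith

lemma aux_rpow_int (r : ℝ) (hr : -1 < r) : IntegrableOn (fun x : ℝ => x ^ r) (Ioo 0 1) := by
  have := intervalIntegral.intervalIntegrable_rpow' (a := 0) (b := 1) hr
  rw [intervalIntegrable_iff_integrableOn_Ioo_of_le zero_le_one] at this
  exact this

lemma aux_rpow_val (r : ℝ) (hr : -1 < r) : ∫ x in Ioo (0:ℝ) 1, x ^ r = 1/(r+1) := by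
  rw [← integral_Ioc_eq_integral_Ioo, ← intervalIntegral.integral_of_le zero_le_one,
    integral_rpow (Or.inl hr), one_rpow, zero_rpow (by linarith)]
  simp

lemma aux_G (ν : ℝ) (hν : ν ∈ Set.Ioo (0:ℝ) 1) :
    IntegrableOn (fun x : ℝ => (2 * x^(ν-1) - 2 * x^(1-ν)) / (1 - x^2)) (Ioo 0 1) ∧
    ∫ x in Ioo (0:ℝ) 1, (2 * x^(ν-1) - 2 * x^(1-ν)) / (1 - x^2) = π * Real.cot (π * ν / 2) := by
  obtain ⟨h0, h1⟩ := hν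
  have hs := aux_cot_hasSum (ν/2) (by linarith) (by linarith)
  let F : ℕ → ℝ → ℝ := fun n x => (x^2)^n * (2 * x^(ν-1) - 2 * x^(1-ν))
  have hFe : ∀ n, EqOn (F n) (fun x => 2 * x^((2*n+ν-1 : ℝ)) - 2 * x^(2*n+1-ν : ℝ)) (Ioo 0 1) := by
    intro n x hx
    have e : (x^2)^n = x ^ (2*n : ℝ) := by
      rw [← pow_mul]; rw [← rpow_natCast]; push_cast; rfl
    simp only [F, e]
    rw [add_sub_assoc, rpow_add hx.1, add_sub_assoc, rpow_add hx.1]; ring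
  have hn0 : ∀ n : ℕ, (0:ℝ) ≤ n := fun n => n.cast_nonneg
  have hi1 : ∀ n : ℕ, IntegrableOn (fun x : ℝ => 2 * x^((2*n+ν-1 : ℝ))) (Ioo 0 1) := fun n =>
    (aux_rpow_int _ (by linarith [hn0 n])).const_mul 2
  have hi2 : ∀ n : ℕ, IntegrableOn (fun x : ℝ => 2 * x^((2*n+1-ν : ℝ))) (Ioo 0 1) := fun n =>
    (aux_rpow_int _ (by linarith [hn0 n])).const_mul 2
  have hFi : ∀ n, IntegrableOn (F n) (Ioo 0 1) := fun n =>
    ((hi1 n).sub (hi2 n)).congr_fun (hFe n).symm measurableSet_Ioo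
  have hFv : ∀ n : ℕ, ∫ x in Ioo (0:ℝ) 1, F n x = 1/((n:ℝ)+ν/2) - 1/((n:ℝ)+1-ν/2) := by
    intro n
    rw [setIntegral_congr_fun measurableSet_Ioo (hFe n), integral_sub (hi1 n) (hi2 n),
      integral_const_mul, integral_const_mul, aux_rpow_val _ (by linarith [hn0 n]),
      aux_rpow_val _ (by linarith [hn0 n])]
    have := hn0 n
    have a1 : (n:ℝ) + ν/2 ≠ 0 := by positivity
    have a2 : (n:ℝ) + 1 - ν/2 ≠ 0 := by linarith
    have a3 : (2 * n + ν - 1 + 1 : ℝ) = 2 * (n + ν/2) := by ring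
    have a4 : (2 * n + 1 - ν + 1 : ℝ) = 2 * (n + 1 - ν/2) := by ring
    rw [a3, a4]
    field_simp
  have hFp : ∀ n, ∀ x ∈ Ioo (0:ℝ) 1, 0 ≤ F n x := by
    intro n x hx
    have : x^(1-ν) ≤ x^(ν-1) := rpow_le_rpow_of_exponent_ge hx.1 hx.2.le (by linarith)
    have : 0 ≤ 2 * x^(ν-1) - 2 * x^(1-ν) := by linarith
    positivity
  have hFn : ∀ n : ℕ, ∫ x in Ioo (0:ℝ) 1, ‖F n x‖ = 1/((n:ℝ)+ν/2) - 1/((n:ℝ)+1-ν/2) := by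
    intro n
    rw [← hFv]
    exact setIntegral_congr_fun measurableSet_Ioo fun x hx => Real.norm_of_nonneg (hFp n x hx)
  have hS := hasSum_integral_of_summable_integral_norm (μ := volume.restrict (Ioo (0:ℝ) 1)) hFi
    (by simp_rw [hFn]; exact hs.summable)
  simp_rw [hFv] at hS
  have hval := hS.unique hs
  have hT : ∀ x ∈ Ioo (0:ℝ) 1, ∑' n, F n x = (2 * x^(ν-1) - 2 * x^(1-ν)) / (1 - x^2) := by
    intro x hx
    simp only [F]
    rw [tsum_mul_right, tsum_geometric_of_lt_one (by positivity) (by nlinarith [hx.1, hx.2])]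
    ring
  rw [setIntegral_congr_fun measurableSet_Ioo hT, ← mul_div_assoc] at hval
  refine ⟨?_, hval⟩
  apply Integrable.of_integral_ne_zero
  rw [hval]
  have hp := Real.pi_pos
  have : 0 < Real.cot (π * ν / 2) := by
    rw [Real.cot_eq_cos_div_sin]
    apply div_pos
    · apply Real.cos_pos_of_mem_Ioo; constructor <;> nlinarith
    · apply Real.sin_pos_of_pos_of_lt_pi <;> nlinarith
  positivity

lemma aux_inv_int (f : ℝ → ℝ) (a : ℝ) (ha : 0 < a) :
    (IntegrableOn f (Ioi a) ↔ IntegrableOn (fun x => (x^2)⁻¹ * f x⁻¹) (Ioo 0 a⁻¹)) ∧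
    ∫ x in Ioi a, f x = ∫ x in Ioo 0 a⁻¹, (x^2)⁻¹ * f x⁻¹ := by
  have hsub : Ioi a ⊆ Ioi (0:ℝ) := Ioi_subset_Ioi ha.le
  have hsub2 : Ioo 0 a⁻¹ ⊆ Ioi (0:ℝ) := fun x hx => hx.1
  have key : ∀ x ∈ Ioi (0:ℝ), (|(-1:ℝ)| * x ^ ((-1:ℝ) - 1)) • (Ioi a).indicator f (x ^ (-1:ℝ))
      = (Ioo 0 a⁻¹).indicator (fun x => (x^2)⁻¹ * f x⁻¹) x := by
    intro x hx
    have hx : 0 < x := hx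
    have e : x ^ ((-1:ℝ) - 1) = (x^2)⁻¹ := by
      rw [show (-1:ℝ) - 1 = -(2:ℕ) by norm_num, rpow_neg hx.le, rpow_natCast]
    rw [rpow_neg_one, e]
    by_cases h : x < a⁻¹
    · have h' : x⁻¹ ∈ Ioi a := by
        rw [mem_Ioi]; exact (lt_inv_comm₀ hx ha).1 h
      rw [indicator_of_mem h', indicator_of_mem (show x ∈ Ioo 0 a⁻¹ from ⟨hx, h⟩)]; simp
    · have h' : x⁻¹ ∉ Ioi a := by
        rw [mem_Ioi]; exact fun h2 => h ((lt_inv_comm₀ hx ha).2 h2)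
      rw [indicator_of_notMem h', indicator_of_notMem (fun h2 => h h2.2)]; simp
  have hI := integral_comp_rpow_Ioi ((Ioi a).indicator f) (p := -1) (by norm_num)
  have hJ := integrableOn_Ioi_comp_rpow_iff ((Ioi a).indicator f) (p := -1) (by norm_num)
  rw [integrableOn_congr_fun key measurableSet_Ioi, IntegrableOn, IntegrableOn,
    integrable_indicator_iff measurableSet_Ioi,
    integrable_indicator_iff measurableSet_Ioo, IntegrableOn, IntegrableOn,
    Measure.restrict_restrict measurableSet_Ioi,
    Measure.restrict_restrict measurableSet_Ioo, inter_eq_left.2 hsub, inter_eq_left.2 hsub2] at hJ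
  rw [setIntegral_congr_fun measurableSet_Ioi key, setIntegral_indicator measurableSet_Ioi,
    setIntegral_indicator measurableSet_Ioo, inter_eq_right.2 hsub, inter_eq_right.2 hsub2] at hI
  exact ⟨hJ.symm, hI.symm⟩

lemma aux_bdd (r b C : ℝ) (hr : -1 < r) (hb : b ≤ 1) (w : ℝ → ℝ) (hw : Measurable w)
    (hC : ∀ x ∈ Ioo 0 b, |w x| ≤ C) : IntegrableOn (fun x : ℝ => x ^ r * w x) (Ioo 0 b) := by
  have h1 : IntegrableOn (fun x : ℝ => x ^ r) (Ioo 0 b) :=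
    (aux_rpow_int r hr).mono_set (Ioo_subset_Ioo_right hb)
  refine Integrable.mono' (h1.mul_const C) (by fun_prop) ?_
  filter_upwards [ae_restrict_mem measurableSet_Ioo] with x hx
  have := rpow_nonneg hx.1.le r
  rw [norm_mul, Real.norm_of_nonneg this, Real.norm_eq_abs]
  exact mul_le_mul_of_nonneg_left (hC x hx) this

lemma aux_H1 (r : ℝ) (hr : -1 < r) : IntegrableOn (fun x : ℝ => x ^ r / (1 + x)) (Ioo 0 1) := by
  simp_rw [div_eq_mul_inv]
  refine aux_bdd r 1 1 hr le_rfl _ (by fun_prop) fun x hx => ?_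
  have : 0 < x := hx.1
  rw [abs_of_pos (by positivity)]
  exact inv_le_one_of_one_le₀ (by linarith)

lemma aux_D1 (r b : ℝ) (hr : -1 < r) (hb : b < 1) :
    IntegrableOn (fun x : ℝ => x ^ r / (1 - x)) (Ioo 0 b) := by
  simp_rw [div_eq_mul_inv]
  refine aux_bdd r b (1-b)⁻¹ hr hb.le _ (by fun_prop) fun x hx => ?_
  have h2 : 0 < 1 - b := by linarith
  have h3 : 1 - b ≤ 1 - x := by linarith [hx.2]
  rw [abs_of_pos (by apply inv_pos.2; linarith)]
  exact inv_anti₀ h2 h3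

lemma aux_inv_rpow (x s : ℝ) (hx : 0 < x) : (x^2)⁻¹ * (x⁻¹) ^ s = x ^ (-s-1) * x⁻¹ := by
  rw [inv_rpow hx.le, ← rpow_neg hx.le, rpow_sub_one hx.ne']
  field_simp

lemma aux_neg (ν : ℝ) (hν : ν ∈ Set.Ioo (0:ℝ) 1) :
    IntegrableOn (fun x : ℝ => |x| ^ (ν - 1) / (x - 1)) (Iic 0) ∧
    ∫ x in Iic (0:ℝ), |x| ^ (ν - 1) / (x - 1) =
      -∫ x in Ioo (0:ℝ) 1, (x ^ (ν-1) / (1+x) + x ^ (-ν) / (1+x)) := by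
  obtain ⟨h0, h1⟩ := hν
  let f : ℝ → ℝ := fun y => |y| ^ (ν - 1) / (-y - 1)
  have hi1 := aux_H1 (ν-1) (by linarith)
  have hi2 := aux_H1 (-ν) (by linarith)
  have e1 : EqOn f (fun x => -(x ^ (ν-1) / (1+x))) (Ioo 0 1) := by
    intro x hx
    simp only [f]
    rw [abs_of_pos hx.1, ← div_neg]; congr 1; ring
  have e2 : EqOn (fun x => (x^2)⁻¹ * f x⁻¹) (fun x => -(x ^ (-ν) / (1+x))) (Ioo 0 (1:ℝ)⁻¹) := by
    intro x hx
    have hx0 := hx.1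
    simp only [f]
    rw [abs_of_pos (inv_pos.2 hx0), ← mul_div_assoc, aux_inv_rpow _ _ hx0,
      show -(ν-1)-1 = -ν by ring]
    have : 1 + x ≠ 0 := by positivity
    have h3 : -x⁻¹ - 1 = -((1+x) * x⁻¹) := by field_simp; ring
    rw [h3]
    field_simp
  obtain ⟨b1, b2⟩ := aux_inv_int f 1 one_pos
  have f1 : IntegrableOn f (Ioo 0 1) := hi1.neg.congr_fun e1.symm measurableSet_Ioo
  have f1' : IntegrableOn f (Ioc 0 1) := (integrableOn_Ioc_iff_integrableOn_Ioo).2 f1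
  have f2 : IntegrableOn f (Ioi 1) := by
    rw [b1, integrableOn_congr_fun e2 measurableSet_Ioo, inv_one]
    exact hi2.neg
  have f3 : IntegrableOn f (Ioi 0) := by
    rw [← Ioc_union_Ioi_eq_Ioi (zero_le_one (α := ℝ))]; exact f1'.union f2
  have efn : (fun x => f (-x)) = fun x : ℝ => |x| ^ (ν - 1) / (x - 1) := by
    funext x; simp [f]
  constructor
  · rw [integrableOn_Iic_iff_integrableOn_Iio, ← efn]
    have f4 : IntegrableOn f (Ioi (-0)) := by simpa using f3
    exact f4.comp_neg_Iio
  · have := integral_comp_neg_Iic 0 f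
    simp only [f, abs_neg, neg_neg, neg_zero] at this
    rw [this]
    change ∫ x in Ioi 0, f x = _
    rw [← Ioc_union_Ioi_eq_Ioi (zero_le_one (α := ℝ)),
      setIntegral_union (Ioc_disjoint_Ioi le_rfl) measurableSet_Ioi f1' f2,
      integral_Ioc_eq_integral_Ioo, b2, setIntegral_congr_fun measurableSet_Ioo e1,
      setIntegral_congr_fun measurableSet_Ioo e2, inv_one, integral_neg, integral_neg,
      integral_add hi1 hi2]
    ring

lemma aux_A (ν : ℝ) (hν : ν ∈ Set.Ioo (0:ℝ) 1) (ε : ℝ) (hε : 0 < ε) (hε1 : ε < 1) :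
    ∫ x in {x : ℝ | ε < |x - 1|}, |x| ^ (ν - 1) / (x - 1) =
      -(∫ x in Ioo (0:ℝ) 1, (x ^ (ν-1) / (1+x) + x ^ (-ν) / (1+x)))
      + (∫ x in Ioo (0:ℝ) (1-ε), (x ^ (-ν) / (1-x) - x ^ (ν-1) / (1-x)))
      + ∫ x in Ico (1-ε) (1+ε)⁻¹, x ^ (-ν) / (1-x) := by
  obtain ⟨n1, n2⟩ := aux_neg ν hν
  obtain ⟨h0, h1⟩ := hν
  set f : ℝ → ℝ := fun x => |x| ^ (ν - 1) / (x - 1) with hf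
  have hinv : (1+ε)⁻¹ < 1 := inv_lt_one_of_one_lt₀ (by linarith)
  have hle : 1 - ε ≤ (1+ε)⁻¹ := by
    rw [le_inv_comm₀ (by linarith) (by linarith), ← one_div, le_div_iff₀ (by linarith)]
    nlinarith
  have hset : {x : ℝ | ε < |x - 1|} = (Iic 0 ∪ Ioo 0 (1-ε)) ∪ Ioi (1+ε) := by
    ext x
    simp only [mem_ofPred_eq, mem_union, mem_Iic, mem_Ioo, mem_Ioi, lt_abs]
    constructor
    · rintro (h | h)
      · right; linarith
      · left
        rcases le_or_gt x 0 with h2 | h2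
        · exact Or.inl h2
        · exact Or.inr ⟨h2, by linarith⟩
    · rintro ((h | h) | h)
      · right; linarith
      · right; linarith [h.2]
      · left; linarith
  have d1 := aux_D1 (-ν) (1-ε) (by linarith) (by linarith)
  have d2 := aux_D1 (ν-1) (1-ε) (by linarith) (by linarith)
  have d3 := aux_D1 (-ν) (1+ε)⁻¹ (by linarith) hinv
  have e1 : EqOn f (fun x => -(x ^ (ν-1) / (1-x))) (Ioo 0 (1-ε)) := by
    intro x hx
    simp only [hf]
    rw [abs_of_pos hx.1, ← div_neg]; congr 1; ring
  have e2 : EqOn (fun x => (x^2)⁻¹ * f x⁻¹) (fun x => x ^ (-ν) / (1-x)) (Ioo 0 (1+ε)⁻¹) := by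
    intro x hx
    have hx0 := hx.1
    simp only [hf]
    rw [abs_of_pos (inv_pos.2 hx0), ← mul_div_assoc, aux_inv_rpow _ _ hx0,
      show -(ν-1)-1 = -ν by ring]
    have : 1 - x ≠ 0 := by linarith [hx.2]
    have h3 : x⁻¹ - 1 = ((1-x) * x⁻¹) := by field_simp
    rw [h3]
    field_simp
  obtain ⟨b1, b2⟩ := aux_inv_int f (1+ε) (by linarith)
  have f1 : IntegrableOn f (Ioo 0 (1-ε)) := d2.neg.congr_fun e1.symm measurableSet_Ioo
  have f2 : IntegrableOn f (Ioi (1+ε)) := by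
    rw [b1, integrableOn_congr_fun e2 measurableSet_Ioo]
    exact d3
  have hsp : Ioo (0:ℝ) (1+ε)⁻¹ = Ioo 0 (1-ε) ∪ Ico (1-ε) (1+ε)⁻¹ :=
    (Ioo_union_Ico_eq_Ioo (by linarith) hle).symm
  have dis1 : Disjoint (Iic (0:ℝ)) (Ioo 0 (1-ε)) := by
    rw [Set.disjoint_left]; intro x hx hx2; exact absurd hx2.1 (not_lt.2 hx)
  have dis2 : Disjoint (Iic (0:ℝ) ∪ Ioo 0 (1-ε)) (Ioi (1+ε)) := by
    rw [Set.disjoint_left]; rintro x (hx | hx) hx2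
    · have a1 : x ≤ 0 := hx
      have a2 : 1 + ε < x := hx2
      linarith
    · have a2 : 1 + ε < x := hx2
      linarith [hx.2]
  have dis3 : Disjoint (Ioo 0 (1-ε)) (Ico (1-ε) (1+ε)⁻¹) := by
    rw [Set.disjoint_left]; intro x hx hx2; exact absurd hx.2 (not_lt.2 hx2.1)
  rw [hset, setIntegral_union dis2 measurableSet_Ioi (n1.union f1) f2,
    setIntegral_union dis1 measurableSet_Ioo n1 f1, n2, b2,
    setIntegral_congr_fun measurableSet_Ioo e1, setIntegral_congr_fun measurableSet_Ioo e2,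
    hsp, setIntegral_union dis3 measurableSet_Ico d1 (d3.mono_set (by rw [hsp]; exact subset_union_right)),
    integral_sub d1 d2, integral_neg]
  ring

lemma aux_small (ν : ℝ) (hν : ν ∈ Set.Ioo (0:ℝ) 1) :
    Tendsto (fun ε : ℝ => ∫ x in Ico (1-ε) (1+ε)⁻¹, x ^ (-ν) / (1-x))
      (nhdsWithin 0 (Ioi 0)) (nhds 0) := by
  have hev : ∀ᶠ ε : ℝ in nhdsWithin 0 (Ioi 0), ε ∈ Ioo (0:ℝ) (1/2) :=
    Ioo_mem_nhdsGT (by norm_num)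
  have hlim : Tendsto (fun ε : ℝ => 2 * ε) (nhdsWithin 0 (Ioi 0)) (nhds 0) := by
    have : Tendsto (fun ε : ℝ => 2 * ε) (nhds 0) (nhds (2 * 0)) := by
      apply Continuous.tendsto; fun_prop
    rw [mul_zero] at this
    exact this.mono_left nhdsWithin_le_nhds
  refine squeeze_zero_norm' ?_ hlim
  filter_upwards [hev] with ε hε
  obtain ⟨h2, h3⟩ := hε
  have hle : 1 - ε ≤ (1+ε)⁻¹ := by
    rw [le_inv_comm₀ (by linarith) (by linarith), ← one_div, le_div_iff₀ (by linarith)]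
    nlinarith
  have hbd : ∀ x ∈ Ico (1-ε) (1+ε)⁻¹, ‖x ^ (-ν) / (1-x)‖ ≤ 2 * ((1+ε)/ε) := by
    intro x hx
    have hx1 : 1/2 ≤ x := by linarith [hx.1]
    have hx0 : 0 < x := by linarith
    have i1 : ε / (1+ε) ≤ 1 - x := by
      have : ε / (1+ε) = 1 - (1+ε)⁻¹ := by field_simp; ring
      rw [this]; linarith [hx.2]
    have i0 : 0 < ε / (1+ε) := by positivity
    have hx2 : x < 1 := by linarith
    have i2 : x ^ (-ν) ≤ 2 := by
      have : x ^ (-ν) ≤ x ^ (-1:ℝ) :=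
        rpow_le_rpow_of_exponent_ge hx0 hx2.le (by linarith [hν.2])
      rw [rpow_neg_one] at this
      have h5 : x⁻¹ ≤ (1/2)⁻¹ := inv_anti₀ (by norm_num) hx1
      norm_num at h5
      linarith
    have i3 := rpow_nonneg hx0.le (-ν)
    have i4 : 0 < 1 - x := by linarith
    rw [Real.norm_of_nonneg (by positivity), div_eq_mul_inv]
    apply mul_le_mul i2 _ (by positivity) (by norm_num)
    rw [← inv_div]
    exact inv_anti₀ i0 i1
  refine (norm_setIntegral_le_of_norm_le_const (by simp) hbd).trans ?_
  rw [Real.volume_real_Ico_of_le hle]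
  have : (1+ε)⁻¹ - (1-ε) = ε^2 / (1+ε) := by field_simp; ring
  rw [this]
  apply le_of_eq
  field_simp

lemma aux_lim (ν : ℝ) (hν : ν ∈ Set.Ioo (0:ℝ) 1) :
    Tendsto (fun ε : ℝ => ∫ x in {x : ℝ | ε < |x - 1|}, |x| ^ (ν - 1) / (x - 1))
      (nhdsWithin 0 (Ioi 0)) (nhds (-(π * Real.cot (π * ν / 2)))) := by
  have hev : ∀ᶠ ε : ℝ in nhdsWithin 0 (Ioi 0), ε ∈ Ioo (0:ℝ) 1 :=
    Ioo_mem_nhdsGT (by norm_num)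
  obtain ⟨g1, g2⟩ := aux_G ν hν
  have hi1 := aux_H1 (ν-1) (by linarith [hν.1])
  have hi2 := aux_H1 (-ν) (by linarith [hν.2])
  let H : ℝ → ℝ := fun x => x ^ (ν-1) / (1+x) + x ^ (-ν) / (1+x)
  let D : ℝ → ℝ := fun x => x ^ (-ν) / (1-x) - x ^ (ν-1) / (1-x)
  have hH : IntegrableOn H (Ioo 0 1) := hi1.add hi2
  have hD : EqOn (fun x => H x - (2 * x^(ν-1) - 2 * x^(1-ν)) / (1 - x^2)) D (Ioo 0 1) := by
    intro x hx
    have e : x ^ (1-ν) = x ^ (-ν) * x := by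
      rw [show 1 - ν = -ν + 1 by ring, rpow_add_one hx.1.ne']
    have n1 : 1 + x ≠ 0 := by linarith [hx.1]
    have n2 : 1 - x ≠ 0 := by linarith [hx.2]
    have n3 : 1 - x^2 = (1+x)*(1-x) := by ring
    simp only [H, D]
    rw [e, n3]
    generalize x ^ (-ν) = p
    generalize x ^ (ν-1) = q
    field_simp
    ring
  have hDi : IntegrableOn D (Ioo 0 1) := (hH.sub g1).congr_fun hD measurableSet_Ioo
  have hDv : ∫ x in Ioo (0:ℝ) 1, D x = (∫ x in Ioo (0:ℝ) 1, H x) - π * Real.cot (π * ν / 2) := by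
    rw [← setIntegral_congr_fun measurableSet_Ioo hD, integral_sub hH g1, g2]
  have hDl : Tendsto (fun ε : ℝ => ∫ x in Ioo (0:ℝ) (1-ε), D x) (nhdsWithin 0 (Ioi 0))
      (nhds (∫ x in Ioo (0:ℝ) 1, D x)) := by
    have hc := intervalIntegral.continuousOn_primitive_interval (f := D) (a := 0) (b := 1)
      (μ := volume) (by
        rw [uIcc_of_le zero_le_one]
        exact (integrableOn_Icc_iff_integrableOn_Ioo).2 hDi)
    rw [uIcc_of_le zero_le_one] at hc
    have h1 := hc 1 (right_mem_Icc.2 zero_le_one)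
    have h2 : Tendsto (fun ε : ℝ => 1 - ε) (nhdsWithin 0 (Ioi 0)) (nhdsWithin 1 (Icc 0 1)) := by
      apply tendsto_nhdsWithin_of_tendsto_nhds_of_eventually_within
      · have : Tendsto (fun ε : ℝ => 1 - ε) (nhds 0) (nhds (1 - 0)) := by
          apply Continuous.tendsto; fun_prop
        rw [sub_zero] at this
        exact this.mono_left nhdsWithin_le_nhds
      · filter_upwards [hev] with ε hε
        exact ⟨by linarith [hε.2], by linarith [hε.1]⟩
    have h3 := h1.tendsto.comp h2
    rw [intervalIntegral.integral_of_le zero_le_one, integral_Ioc_eq_integral_Ioo] at h3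
    refine h3.congr' ?_
    filter_upwards [hev] with ε hε
    simp only [Function.comp]
    rw [intervalIntegral.integral_of_le (by linarith [hε.2]), integral_Ioc_eq_integral_Ioo]
  have hfin := (hDl.const_add (-∫ x in Ioo (0:ℝ) 1, H x)).add (aux_small ν hν)
  rw [hDv] at hfin
  have e : -(∫ x in Ioo (0:ℝ) 1, H x) + ((∫ x in Ioo (0:ℝ) 1, H x) - π * Real.cot (π * ν / 2)) + 0
    = -(π * Real.cot (π * ν / 2)) := by ring
  rw [e] at hfin
  refine hfin.congr' ?_
  filter_upwards [hev] with ε hε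
  rw [aux_A ν hν ε hε.1 hε.2]

lemma aux_scale (ν u ε : ℝ) (hu : u ≠ 0) :
    ∫ x in {x : ℝ | ε < |x - u|}, |x| ^ (ν - 1) / (x - u) =
      |u| ^ (ν - 1) * Real.sign u *
        ∫ x in {x : ℝ | ε / |u| < |x - 1|}, |x| ^ (ν - 1) / (x - 1) := by
  have hm : ∀ c d : ℝ, MeasurableSet {x : ℝ | c < |x - d|} := fun c d =>
    measurableSet_lt measurable_const (by fun_prop)
  have hu' : 0 < |u| := abs_pos.2 hu
  rw [← integral_indicator (hm _ _), ← integral_indicator (hm _ _)]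
  set g := indicator {x : ℝ | ε < |x - u|} (fun x => |x| ^ (ν - 1) / (x - u)) with hg
  have h := Measure.integral_comp_mul_left g u
  have h2 : ∫ x, g x = |u| * ∫ x, g (u * x) := by
    rw [h, smul_eq_mul, abs_inv, mul_inv_cancel_left₀ hu'.ne']
  rw [h2, ← integral_const_mul, ← integral_const_mul]
  congr 1
  funext x
  have habs : |u * x - u| = |u| * |x - 1| := by rw [← abs_mul]; congr 1; ring
  have hiff : ε < |u * x - u| ↔ ε / |u| < |x - 1| := by
    rw [habs, div_lt_iff₀ hu', mul_comm]
  have hs : Real.sign u = |u| / u := by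
    rcases lt_or_gt_of_ne hu with h | h
    · rw [Real.sign_of_neg h, abs_of_neg h, neg_div, div_self hu]
    · rw [Real.sign_of_pos h, abs_of_pos h, div_self hu]
  by_cases hx : ε / |u| < |x - 1|
  · rw [hg, indicator_of_mem (show u * x ∈ {x : ℝ | ε < |x - u|} from hiff.2 hx),
      indicator_of_mem (show x ∈ {x : ℝ | ε / |u| < |x - 1|} from hx), hs, abs_mul,
      mul_rpow (abs_nonneg _) (abs_nonneg _), show u * x - u = u * (x - 1) by ring, mul_div_mul_comm]
    ring
  · rw [hg, indicator_of_notMem (show u * x ∉ {x : ℝ | ε < |x - u|} from fun h => hx (hiff.1 h)),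
      indicator_of_notMem (show x ∉ {x : ℝ | ε / |u| < |x - 1|} from hx)]
    simp

/-- For every `ν ∈ (0,1)` and every `u ≠ 0`, the principal value integral
`(1/π) p.v.∫_{-∞}^{∞} |u'|^(ν-1)/(u' - u) du'` exists (as the limit as `ε → 0⁺` of the
integral over `{u' : |u' - u| > ε}`) and equals `-cot(πν/2) |u|^(ν-1) sgn(u)`. -/
theorem pv_integral_abs_rpow (ν : ℝ) (hν : ν ∈ Set.Ioo (0:ℝ) 1) (u : ℝ) (hu : u ≠ 0) :
    Filter.Tendsto
      (fun ε : ℝ => (1/π) * ∫ x in {x : ℝ | ε < |x - u|}, |x| ^ (ν - 1) / (x - u))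
      (nhdsWithin (0:ℝ) (Set.Ioi 0))
      (nhds (-Real.cot (π * ν / 2) * |u| ^ (ν - 1) * Real.sign u)) := by
  have hu' : 0 < |u| := abs_pos.2 hu
  have h2 : Tendsto (fun ε : ℝ => ε / |u|) (nhdsWithin 0 (Ioi 0)) (nhdsWithin 0 (Ioi 0)) := by
    apply tendsto_nhdsWithin_of_tendsto_nhds_of_eventually_within
    · have : Tendsto (fun ε : ℝ => ε / |u|) (nhds 0) (nhds (0 / |u|)) := by
        apply Continuous.tendsto; fun_prop
      rw [zero_div] at this
      exact this.mono_left nhdsWithin_le_nhds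
    · filter_upwards [self_mem_nhdsWithin] with ε hε
      exact div_pos hε hu'
  have h3 := (((aux_lim ν hν).comp h2).const_mul (|u| ^ (ν - 1) * Real.sign u)).const_mul (1/π)
  have e : 1/π * (|u| ^ (ν - 1) * Real.sign u * -(π * Real.cot (π * ν / 2))) =
      -Real.cot (π * ν / 2) * |u| ^ (ν - 1) * Real.sign u := by
    have := Real.pi_pos.ne'
    field_simp
  rw [e] at h3
  refine h3.congr fun ε => ?_
  rw [aux_scale ν u ε hu]
  rfl
end

section
/- Let β ∈ (0,1/2) and let f be the 2π-periodic extension of u ↦ |u|^{2β} from [−π,π). Then there exist constants C > 0 and δ ∈ (0,π) such that for all u with 0 < |u| < δ, |(K_∞ f)(u) + 2β tan(πβ) · |u|^{2β−1}| ≤ C; that is, (K_∞ f)(u) = −2β tan(πβ) |u|^{2β−1} + O(1) as u → 0. -/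
open Real MeasureTheory Filter Set Asymptotics

/-- Principal value (at `u`) of the integral of `g` over `(-π, π)`. -/
noncomputable def pvInt (g : ℝ → ℝ) (u : ℝ) : ℝ :=
  limUnder (nhdsWithin (0:ℝ) (Set.Ioi 0))
    (fun ε : ℝ => ∫ x in {x : ℝ | x ∈ Set.Ioo (-π) π ∧ ε < |x - u|}, g x)

/-- Periodic Hilbert transform of a `2π`-periodic function:
`ℋ(f)(u) = (1/π) Σ_{n ∈ ℤ} p.v.∫_{-π}^{π} f(x)/(x - u + 2πn) dx`. -/
noncomputable def periodicHilbert (f : ℝ → ℝ) (u : ℝ) : ℝ :=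
  (1/π) * ∑' n : ℤ, pvInt (fun x => f x / (x - u + 2*π*(n : ℝ))) u

/-- The operator `K_∞ = -ℋ ∂ᵤ` acting via the a.e. derivative. -/
noncomputable def Kinf (f : ℝ → ℝ) (u : ℝ) : ℝ := - periodicHilbert (deriv f) u

/-- The `2π`-periodic extension of `g : [-π, π) → ℝ`. -/
noncomputable def perExt (g : ℝ → ℝ) (x : ℝ) : ℝ :=
  g (x - 2*π*(⌊(x + π)/(2*π)⌋ : ℝ))


lemma aux_hs_congr {f g : ℕ → ℝ} {a b : ℝ} (h : HasSum f a) (hf : ∀ k, g k = f k) (hab : b = a) :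
    HasSum g b := by
  obtain rfl : g = f := funext hf
  rwa [hab]

lemma aux_tan_series (a : ℝ) (h0 : 0 < a) (h1 : a < 1) :
    HasSum (fun k : ℕ => 1/(2*(k:ℝ)+1-a) - 1/(2*(k:ℝ)+1+a)) (π/2 * Real.tan (π*(a/2))) := by
  set z : ℝ := (1-a)/2 with hz
  have hz0 : 0 < z := by rw [hz]; linarith
  have hz1 : z < 1 := by rw [hz]; linarith
  have hzi : (z:ℂ) ∈ Complex.integerComplement := by
    rw [Complex.mem_integerComplement_iff]
    rintro ⟨n, hn⟩
    have hn' : (n:ℝ) = z := by exact_mod_cast hn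
    have a1 : (0:ℝ) < n := by rw [hn']; exact hz0
    have a2 : (n:ℝ) < 1 := by rw [hn']; exact hz1
    have a3 : 0 < n := by exact_mod_cast a1
    have a4 : n < 1 := by exact_mod_cast a2
    omega
  have hC := (summable_cotTerm hzi).hasSum
  have hrep := cot_series_rep' hzi
  simp only [cotTerm] at hC
  rw [← hrep] at hC
  have hR : HasSum (fun n : ℕ => 1/(z-((n:ℝ)+1)) + 1/(z+((n:ℝ)+1))) (π * Real.cot (π*z) - 1/z) := by
    rw [← Complex.hasSum_ofReal]
    convert hC using 1
    · ext n; push_cast; rfl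
    · push_cast; rfl
  have hcot : Real.cot (π*z) = Real.tan (π*(a/2)) := by
    rw [Real.cot_eq_cos_div_sin, Real.tan_eq_sin_div_cos, hz,
      show π*((1-a)/2) = π/2 - π*(a/2) by ring, Real.cos_pi_div_two_sub, Real.sin_pi_div_two_sub]
  have hT := hR.tendsto_sum_nat
  have hid : ∀ N : ℕ, ∑ k ∈ Finset.range N, (1/(2*(k:ℝ)+1-a) - 1/(2*(k:ℝ)+1+a)) =
      1/2*(1/z + (∑ k ∈ Finset.range N, (1/(z-((k:ℝ)+1)) + 1/(z+((k:ℝ)+1)))) - 1/(z+N)) := by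
    intro N
    induction N with
    | zero => simp
    | succ N ih =>
      rw [Finset.sum_range_succ, Finset.sum_range_succ, ih]
      have hN : (0:ℝ) ≤ N := Nat.cast_nonneg N
      have e1 : 1/(2*(N:ℝ)+1-a) = 1/2*(1/(z+N)) := by
        have : 2*(N:ℝ)+1-a = 2*(z+N) := by rw [hz]; ring
        rw [this]; have : z + N ≠ 0 := by positivity
        field_simp
      have e2 : 1/(2*(N:ℝ)+1+a) = -(1/2*(1/(z-((N:ℝ)+1)))) := by
        have : 2*(N:ℝ)+1+a = -(2*(z-(N+1))) := by rw [hz]; ring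
        rw [this]; have : z - (N+1) ≠ 0 := by intro h; linarith
        field_simp
      rw [e1, e2]; push_cast; ring
  rw [hasSum_iff_tendsto_nat_of_nonneg]
  · simp_rw [hid]
    have h3 : Tendsto (fun N : ℕ => 1/(z+(N:ℝ))) atTop (nhds 0) := by
      simp_rw [one_div]
      exact (tendsto_atTop_add_const_left _ z tendsto_natCast_atTop_atTop).inv_tendsto_atTop
    have := ((hT.const_add (1/z)).sub h3).const_mul (1/2:ℝ)
    convert this using 2
    rw [hcot]; ring
  · intro k
    have hk : (0:ℝ) ≤ k := Nat.cast_nonneg k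
    rw [sub_nonneg]
    apply one_div_le_one_div_of_le <;> linarith

noncomputable def auxPhi (a t : ℝ) : ℝ := (t^a - 1)/(t^2-1)

lemma auxPhi_meas (a : ℝ) : Measurable (auxPhi a) := by
  unfold auxPhi; fun_prop

lemma auxPhi_nonneg (a : ℝ) (h0 : 0 < a) (t : ℝ) (ht : 0 < t) : 0 ≤ auxPhi a t := by
  unfold auxPhi
  rcases le_total t 1 with h | h
  · apply div_nonneg_of_nonpos
    · linarith [Real.rpow_le_one ht.le h h0.le]
    · nlinarith
  · apply div_nonneg
    · linarith [Real.one_le_rpow h h0.le]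
    · nlinarith

lemma auxPhi_le_one (a : ℝ) (h0 : 0 < a) (h1 : a < 1) (t : ℝ) (ht : 0 < t) : auxPhi a t ≤ 1 := by
  unfold auxPhi
  rcases lt_trichotomy t 1 with h | h | h
  · rw [div_le_one_of_neg (by nlinarith)]
    have : t ^ (1:ℝ) ≤ t^a := Real.rpow_le_rpow_of_exponent_ge ht h.le h1.le
    rw [Real.rpow_one] at this
    nlinarith
  · simp [h]
  · rw [div_le_one (by nlinarith)]
    have : t ^ a ≤ t^(1:ℝ) := Real.rpow_le_rpow_of_exponent_le h.le h1.le
    rw [Real.rpow_one] at this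
    nlinarith

lemma auxPhi_le_tail (a : ℝ) (t : ℝ) (ht : 2 ≤ t) : auxPhi a t ≤ 2*t^(a-2) := by
  unfold auxPhi
  rw [div_le_iff₀ (by nlinarith)]
  have ht0 : 0 < t := by linarith
  have e : t^a = t^(a-2) * t^2 := by
    rw [← Real.rpow_natCast t 2, ← Real.rpow_add ht0]; norm_num
  have hp : 0 < t^(a-2) := Real.rpow_pos_of_pos ht0 _
  rw [e]
  nlinarith [mul_nonneg hp.le (show 0 ≤ t^2 - 2 by nlinarith)]

lemma auxPhi_tail_int (a : ℝ) (h0 : 0 < a) (h1 : a < 1) (T : ℝ) (hT : 2 ≤ T) :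
    IntegrableOn (auxPhi a) (Ioi T) ∧ 0 ≤ ∫ t in Ioi T, auxPhi a t ∧
      ∫ t in Ioi T, auxPhi a t ≤ 2 * T^(a-1) / (1-a) := by
  have hI : IntegrableOn (fun t : ℝ => 2*t^(a-2)) (Ioi T) :=
    (integrableOn_Ioi_rpow_of_lt (by linarith) (by linarith)).const_mul 2
  have hP : IntegrableOn (auxPhi a) (Ioi T) := by
    refine Integrable.mono' hI (auxPhi_meas a).aestronglyMeasurable ?_
    refine (ae_restrict_iff' measurableSet_Ioi).mpr (Eventually.of_forall fun t ht => ?_)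
    have ht' : T < t := ht
    rw [Real.norm_of_nonneg (auxPhi_nonneg a h0 t (by linarith))]
    exact auxPhi_le_tail a t (by linarith)
  refine ⟨hP, ?_, ?_⟩
  · refine setIntegral_nonneg measurableSet_Ioi fun t ht => ?_
    have ht' : T < t := ht
    exact auxPhi_nonneg a h0 t (by linarith)
  · calc ∫ t in Ioi T, auxPhi a t ≤ ∫ t in Ioi T, 2*t^(a-2) := by
          refine setIntegral_mono_on hP hI measurableSet_Ioi fun t ht => ?_
          have ht' : T < t := ht
          exact auxPhi_le_tail a t (by linarith)
      _ = 2 * T^(a-1) / (1-a) := by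
          rw [integral_const_mul, integral_Ioi_rpow_of_lt (by linarith) (by linarith),
            show a - 2 + 1 = a - 1 by ring]
          have : 1 - a ≠ 0 := by linarith
          have : a - 1 ≠ 0 := by linarith
          field_simp
          ring

lemma auxPhi_int (a : ℝ) (h0 : 0 < a) (h1 : a < 1) : IntegrableOn (auxPhi a) (Ioi 0) := by
  rw [← Ioc_union_Ioi_eq_Ioi (show (0:ℝ) ≤ 2 by norm_num)]
  refine IntegrableOn.union ?_ (auxPhi_tail_int a h0 h1 2 le_rfl).1
  refine Integrable.mono' (g := fun _ => (1:ℝ)) (by simp) (auxPhi_meas a).aestronglyMeasurable ?_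
  refine (ae_restrict_iff' measurableSet_Ioc).mpr (Eventually.of_forall fun t ht => ?_)
  rw [Real.norm_of_nonneg (auxPhi_nonneg a h0 t ht.1)]
  exact auxPhi_le_one a h0 h1 t ht.1

-- general summation
lemma aux_hasSum {s : Set ℝ} (hs : MeasurableSet s) (F : ℕ → ℝ → ℝ) (f : ℝ → ℝ) (c : ℕ → ℝ)
    (hF : ∀ k, IntegrableOn (F k) s) (hpos : ∀ k, ∀ t ∈ s, 0 ≤ F k t)
    (hc : ∀ k, ∫ t in s, F k t = c k) (hsum : Summable c)
    (hf : ∀ t ∈ s, HasSum (fun k => F k t) (f t)) : HasSum c (∫ t in s, f t) := by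
  have hn : ∀ k, ∫ t in s, ‖F k t‖ = c k := fun k => by
    rw [← hc k]
    exact setIntegral_congr_fun hs fun t ht => Real.norm_of_nonneg (hpos k t ht)
  have := hasSum_integral_of_summable_integral_norm (μ := volume.restrict s) hF (by simp only [hn]; exact hsum)
  simp only [hc] at this
  refine aux_hs_congr this (fun _ => rfl) ?_
  exact setIntegral_congr_fun hs fun t ht => (hf t ht).tsum_eq.symm

lemma auxPhi_val (a : ℝ) (h0 : 0 < a) (h1 : a < 1) :
    ∫ t in Ioi 0, auxPhi a t = π/2 * Real.tan (π*(a/2)) := by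
  have hT := aux_tan_series a h0 h1
  have hk : ∀ k : ℕ, (0:ℝ) ≤ k := fun k => Nat.cast_nonneg k
  have hd1 : ∀ k : ℕ, 0 ≤ 1/(2*(k:ℝ)+1) - 1/(2*(k:ℝ)+1+a) := fun k => by
    have := hk k
    rw [sub_nonneg]; apply one_div_le_one_div_of_le <;> linarith
  have hd2 : ∀ k : ℕ, 0 ≤ 1/(2*(k:ℝ)+1-a) - 1/(2*(k:ℝ)+1) := fun k => by
    have := hk k
    rw [sub_nonneg]; apply one_div_le_one_div_of_le <;> linarith
  have hs1 : Summable (fun k : ℕ => 1/(2*(k:ℝ)+1) - 1/(2*(k:ℝ)+1+a)) :=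
    Summable.of_nonneg_of_le hd1 (fun k => by linarith [hd2 k]) hT.summable
  have hs2 : Summable (fun k : ℕ => 1/(2*(k:ℝ)+1-a) - 1/(2*(k:ℝ)+1)) :=
    Summable.of_nonneg_of_le hd2 (fun k => by linarith [hd1 k]) hT.summable
  have A1 : HasSum (fun k : ℕ => 1/(2*(k:ℝ)+1) - 1/(2*(k:ℝ)+1+a)) (∫ t in Ioo 0 1, auxPhi a t) := by
    have hi : ∀ r : ℝ, 0 ≤ r → IntegrableOn (fun t : ℝ => t^r) (Ioo 0 1) := fun r hr => by
      have := (intervalIntegral.intervalIntegrable_rpow' (a := 0) (b := 1) (show -1 < r by linarith))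
      rw [intervalIntegrable_iff_integrableOn_Ioo_of_le zero_le_one] at this
      exact this
    have hv : ∀ r : ℝ, 0 ≤ r → ∫ t in Ioo (0:ℝ) 1, t^r = 1/(r+1) := fun r hr => by
      rw [← integral_Ioc_eq_integral_Ioo, ← intervalIntegral.integral_of_le zero_le_one,
        integral_rpow (Or.inl (by linarith)), Real.one_rpow, Real.zero_rpow (by linarith)]
      simp
    refine aux_hasSum measurableSet_Ioo (fun k t => t^(2*(k:ℝ)) - t^(2*(k:ℝ)+a)) _ _
      (fun k => (hi _ ?_).sub (hi _ ?_)) ?_ (fun k => ?_) hs1 ?_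
    · have := hk k; positivity
    · have := hk k; positivity
    · intro k t ht
      rw [sub_nonneg]
      exact Real.rpow_le_rpow_of_exponent_ge ht.1 ht.2.le (by linarith)
    · have := hk k
      rw [integral_sub (hi _ (by positivity)) (hi _ (by positivity)), hv _ (by positivity),
        hv _ (by positivity), add_right_comm]
    · intro t ht
      have hg := (hasSum_geometric_of_lt_one (sq_nonneg t) (by nlinarith [ht.1, ht.2])).mul_left (1 - t^a)
      refine aux_hs_congr hg (fun k => ?_) ?_
      · show _ - _ = _
        rw [Real.rpow_add ht.1, Real.rpow_mul ht.1.le, Real.rpow_natCast]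
        norm_num; ring
      · unfold auxPhi
        have : 1 - t^2 ≠ 0 := by nlinarith [ht.1, ht.2]
        have : t^2 - 1 ≠ 0 := by nlinarith [ht.1, ht.2]
        field_simp; ring
  have A2 : HasSum (fun k : ℕ => 1/(2*(k:ℝ)+1-a) - 1/(2*(k:ℝ)+1)) (∫ t in Ioi 1, auxPhi a t) := by
    have hi : ∀ r : ℝ, r < -1 → IntegrableOn (fun t : ℝ => t^r) (Ioi 1) := fun r hr =>
      integrableOn_Ioi_rpow_of_lt hr one_pos
    have hv : ∀ r : ℝ, r < -1 → ∫ t in Ioi (1:ℝ), t^r = 1/(-r-1) := fun r hr => by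
      rw [integral_Ioi_rpow_of_lt hr one_pos, Real.one_rpow]
      have : r + 1 ≠ 0 := by linarith
      have : -r - 1 ≠ 0 := by linarith
      field_simp; ring
    refine aux_hasSum measurableSet_Ioi (fun k t => t^(a-2-2*(k:ℝ)) - t^(-2-2*(k:ℝ))) _ _
      (fun k => (hi _ ?_).sub (hi _ ?_)) ?_ (fun k => ?_) hs2 ?_
    · linarith [hk k]
    · linarith [hk k]
    · intro k t ht
      rw [sub_nonneg]
      exact Real.rpow_le_rpow_of_exponent_le (le_of_lt ht) (by linarith)
    · have := hk k
      rw [integral_sub (hi _ (by linarith)) (hi _ (by linarith)), hv _ (by linarith),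
        hv _ (by linarith)]
      congr 2 <;> ring
    · intro t ht
      have ht1 : 1 < t := ht
      have ht0 : 0 < t := by linarith
      have hg := (hasSum_geometric_of_lt_one (r := (t^2)⁻¹) (by positivity)
        (inv_lt_one_of_one_lt₀ (by nlinarith))).mul_left ((t^a - 1)*(t^2)⁻¹)
      refine aux_hs_congr hg (fun k => ?_) ?_
      · show _ - _ = _
        rw [show a - 2 - 2*(k:ℝ) = a + (-2-2*(k:ℝ)) by ring, Real.rpow_add ht0,
          show -2-2*(k:ℝ) = -((2:ℕ):ℝ) + (2:ℕ)*(-(k:ℝ)) by push_cast; ring, Real.rpow_add ht0, Real.rpow_mul ht0.le,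
          Real.rpow_neg ht0.le, Real.rpow_neg (by positivity), Real.rpow_natCast, Real.rpow_natCast, inv_pow]
        ring
      · unfold auxPhi
        have : t^2 - 1 ≠ 0 := by nlinarith
        have : t^2 ≠ 0 := by positivity
        have h5 : 1 - (t^2)⁻¹ = (t^2-1)/t^2 := by field_simp
        rw [h5]
        field_simp
  have hi := auxPhi_int a h0 h1
  rw [← Ioc_union_Ioi_eq_Ioi (zero_le_one' ℝ), setIntegral_union (Ioc_disjoint_Ioi le_rfl) measurableSet_Ioi
    (hi.mono_set Ioc_subset_Ioi_self) (hi.mono_set (Ioi_subset_Ioi zero_le_one)), integral_Ioc_eq_integral_Ioo]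
  refine (A1.add A2).unique ?_
  exact aux_hs_congr hT (fun k => by ring) rfl

noncomputable def auxG (a x : ℝ) : ℝ := a * x * |x|^(a-2)

lemma auxG_meas (a : ℝ) : Measurable (auxG a) := by
  unfold auxG
  have : Measurable (fun x : ℝ => |x|^(a-2)) := (continuous_abs.measurable).pow_const _
  fun_prop

lemma auxG_neg (a x : ℝ) : auxG a (-x) = - auxG a x := by
  unfold auxG; rw [abs_neg]; ring

lemma auxG_mul (a : ℝ) (h0 : 0 < a) (x : ℝ) : x * auxG a x = a * |x|^a := by
  unfold auxG
  rcases eq_or_ne x 0 with rfl | hx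
  · simp [Real.zero_rpow h0.ne']
  · have hp : 0 < |x| := abs_pos.mpr hx
    have e : |x|^a = |x|^(a-2) * |x|^2 := by
      rw [← Real.rpow_natCast |x| 2, ← Real.rpow_add hp]; norm_num
    rw [e, sq_abs]; ring

lemma auxG_abs (a : ℝ) (h0 : 0 < a) (h1 : a < 1) (x : ℝ) : |auxG a x| = a * |x|^(a-1) := by
  unfold auxG
  rcases eq_or_ne x 0 with rfl | hx
  · simp [Real.zero_rpow (show a - 1 ≠ 0 by linarith)]
  · have hp : 0 < |x| := abs_pos.mpr hx
    have e : |x|^(a-1) = |x|^(a-2) * |x| := by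
      rw [← Real.rpow_add_one hp.ne']; ring_nf
    rw [abs_mul, abs_mul, abs_of_pos h0, abs_of_pos (Real.rpow_pos_of_pos hp _), e]; ring

lemma aux_intervalIntegrable_abs (a : ℝ) (h0 : 0 < a) :
    IntegrableOn (fun x : ℝ => |x|^(a-1)) (Ioo (-π) π) := by
  have h := intervalIntegral.intervalIntegrable_rpow' (a := 0) (b := π) (show -1 < a-1 by linarith)
  have hr : IntervalIntegrable (fun x : ℝ => |x|^(a-1)) volume 0 π := by
    refine h.congr ?_
    intro x hx
    rw [uIoc_of_le pi_pos.le] at hx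
    simp only [abs_of_pos hx.1]
  have hl : IntervalIntegrable (fun x : ℝ => |x|^(a-1)) volume (-π) 0 := by
    have := (IntervalIntegrable.iff_comp_neg (f := fun x : ℝ => |x|^(a-1)) (a := 0) (b := π)).mp hr
    simpa using this.symm
  have := hl.trans hr
  rwa [intervalIntegrable_iff_integrableOn_Ioo_of_le (by linarith [pi_pos])] at this

lemma auxG_int (a : ℝ) (h0 : 0 < a) (h1 : a < 1) : IntegrableOn (auxG a) (Ioo (-π) π) := by
  refine Integrable.mono' ((aux_intervalIntegrable_abs a h0).const_mul a) (auxG_meas a).aestronglyMeasurable ?_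
  exact Eventually.of_forall fun x => (auxG_abs a h0 h1 x).le

lemma aux_hasDerivAt (a : ℝ) (x : ℝ) (hx : x ≠ 0) :
    HasDerivAt (fun x : ℝ => |x|^a) (auxG a x) x := by
  have hp : 0 < |x| := abs_pos.mpr hx
  have h := (hasDerivAt_abs hx).rpow_const (p := a) (Or.inl hp.ne')
  convert h using 1
  unfold auxG
  have e : |x|^(a-1) = |x|^(a-2) * |x| := by
    rw [← Real.rpow_add_one hp.ne']; ring_nf
  rw [e]
  rcases lt_or_gt_of_ne hx with h | h
  · rw [sign_neg h, abs_of_neg h]; simp; ring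
  · rw [sign_pos h, abs_of_pos h]; simp; ring

lemma aux_diffG (a : ℝ) (x : ℝ) (hx : x ≠ 0) : DifferentiableAt ℝ (auxG a) x := by
  have := (aux_hasDerivAt (a-2) x hx).differentiableAt
  unfold auxG
  exact (differentiableAt_id.const_mul a).mul this

lemma aux_perExt (g : ℝ → ℝ) (x : ℝ) (hx : x ∈ Ioo (-π) π) : perExt g x = g x := by
  unfold perExt
  have : ⌊(x + π)/(2*π)⌋ = 0 := by
    rw [Int.floor_eq_zero_iff]
    constructor
    · exact div_nonneg (by linarith [hx.1]) (by linarith [pi_pos])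
    · rw [div_lt_one (by linarith [pi_pos])]; linarith [hx.2]
  rw [this]; simp

lemma aux_deriv (a : ℝ) (x : ℝ) (hx : x ∈ Ioo (-π) π) (hx0 : x ≠ 0) :
    deriv (perExt (fun x => |x|^a)) x = auxG a x := by
  have : perExt (fun x => |x|^a) =ᶠ[nhds x] (fun x => |x|^a) := by
    filter_upwards [isOpen_Ioo.mem_nhds hx] with y hy
    exact aux_perExt _ y hy
  rw [this.deriv_eq]
  exact (aux_hasDerivAt a x hx0).deriv

lemma aux_meas_S (u ε : ℝ) : MeasurableSet {x : ℝ | x ∈ Set.Ioo (-π) π ∧ ε < |x - u|} := by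
  have : {x : ℝ | x ∈ Set.Ioo (-π) π ∧ ε < |x - u|} = Ioo (-π) π ∩ {x | ε < |x - u|} := rfl
  rw [this]
  refine measurableSet_Ioo.inter (measurableSet_lt measurable_const ?_)
  fun_prop

lemma aux_pv_tendsto (f : ℝ → ℝ) (u : ℝ) (hf : IntegrableOn f (Ioo (-π) π)) :
    Tendsto (fun ε : ℝ => ∫ x in {x : ℝ | x ∈ Set.Ioo (-π) π ∧ ε < |x - u|}, f x)
      (nhdsWithin (0:ℝ) (Set.Ioi 0)) (nhds (∫ x in Ioo (-π) π, f x)) := by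
  have e : ∀ ε : ℝ, ∫ x in {x : ℝ | x ∈ Set.Ioo (-π) π ∧ ε < |x - u|}, f x =
      ∫ x in Ioo (-π) π, ({x : ℝ | ε < |x - u|}).indicator f x := by
    intro ε
    have hm : MeasurableSet {x : ℝ | ε < |x - u|} := measurableSet_lt measurable_const (by fun_prop)
    rw [setIntegral_indicator hm]
    rfl
  simp_rw [e]
  refine tendsto_integral_filter_of_dominated_convergence (fun x => ‖f x‖) ?_ ?_ hf.norm ?_
  · refine Eventually.of_forall fun ε => ?_
    have hm : MeasurableSet {x : ℝ | ε < |x - u|} := measurableSet_lt measurable_const (by fun_prop)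
    exact hf.aestronglyMeasurable.indicator hm
  · exact Eventually.of_forall fun ε => Eventually.of_forall fun x => norm_indicator_le_norm_self _ _
  · have hne : ∀ᵐ x ∂(volume.restrict (Ioo (-π) π)), x ≠ u :=
      ae_restrict_of_ae (by simp [ae_iff, measure_singleton])
    filter_upwards [hne] with x hx
    have hpos : 0 < |x - u| := abs_pos.mpr (sub_ne_zero.mpr hx)
    refine tendsto_const_nhds.congr' ?_
    filter_upwards [mem_nhdsWithin_of_mem_nhds (Iio_mem_nhds hpos)] with ε hε
    rw [indicator_of_mem]
    exact hε

lemma aux_pv_congr (f g : ℝ → ℝ) (u : ℝ) (h : ∀ x ∈ Ioo (-π) π, x ≠ 0 → f x = g x) :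
    pvInt f u = pvInt g u := by
  unfold pvInt
  congr 1
  ext ε
  refine setIntegral_congr_ae (aux_meas_S u ε) ?_
  have hne : ∀ᵐ x : ℝ, x ≠ 0 := by simp [ae_iff, measure_singleton]
  filter_upwards [hne] with x hx hS
  exact h x hS.1 hx

lemma aux_fold (f : ℝ → ℝ) (hf : IntegrableOn f (Ioo (-π) π)) :
    ∫ x in Ioo (-π) π, f x = ∫ x in (0:ℝ)..π, (f x + f (-x)) := by
  have hp := pi_pos
  have hI : IntervalIntegrable f volume (-π) π := by
    rwa [intervalIntegrable_iff_integrableOn_Ioo_of_le (by linarith)]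
  have hl : IntervalIntegrable f volume (-π) 0 :=
    hI.mono_set (by rw [uIcc_of_le (by linarith), uIcc_of_le (by linarith)]; exact Icc_subset_Icc le_rfl hp.le)
  have hr : IntervalIntegrable f volume 0 π :=
    hI.mono_set (by rw [uIcc_of_le (by linarith), uIcc_of_le (by linarith)]; exact Icc_subset_Icc (by linarith) le_rfl)
  have hl' : IntervalIntegrable (fun x => f (-x)) volume 0 π := by
    have := (IntervalIntegrable.iff_comp_neg (f := f)).mp hl
    simpa using this.symm
  rw [intervalIntegral.integral_add hr hl', intervalIntegral.integral_comp_neg, ← integral_Ioc_eq_integral_Ioo,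
    ← intervalIntegral.integral_of_le (by linarith), ← intervalIntegral.integral_add_adjacent_intervals hl hr]
  simp [add_comm]

lemma aux_log (u : ℝ) (hu : |u| < 1) : ∀ᶠ ε in nhdsWithin (0:ℝ) (Set.Ioi 0),
    IntegrableOn (fun x : ℝ => (x-u)⁻¹) {x : ℝ | x ∈ Set.Ioo (-π) π ∧ ε < |x - u|} ∧
    ∫ x in {x : ℝ | x ∈ Set.Ioo (-π) π ∧ ε < |x - u|}, (x-u)⁻¹ = Real.log ((π-u)/(π+u)) := by
  have hp := pi_gt_three
  have hu1 := (abs_lt.mp hu).1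
  have hu2 := (abs_lt.mp hu).2
  filter_upwards [self_mem_nhdsWithin, mem_nhdsWithin_of_mem_nhds (Iio_mem_nhds one_pos)] with ε h0 h1
  have h0' : 0 < ε := h0
  have h1' : ε < 1 := h1
  have hS : {x : ℝ | x ∈ Set.Ioo (-π) π ∧ ε < |x - u|} = Ioo (-π) (u-ε) ∪ Ioo (u+ε) π := by
    ext x
    simp only [mem_ofPred_eq, mem_Ioo, mem_union, lt_abs]
    constructor
    · rintro ⟨⟨a1, a2⟩, h | h⟩
      · right; constructor <;> linarith
      · left; constructor <;> linarith
    · rintro (⟨a1, a2⟩ | ⟨a1, a2⟩)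
      · refine ⟨⟨by linarith, by linarith⟩, Or.inr (by linarith)⟩
      · refine ⟨⟨by linarith, by linarith⟩, Or.inl (by linarith)⟩
  have hd : Disjoint (Ioo (-π) (u-ε)) (Ioo (u+ε) π) := by
    rw [Set.disjoint_left]; rintro x ⟨_, a⟩ ⟨b, _⟩; linarith
  have i1 : IntervalIntegrable (fun x : ℝ => (x-u)⁻¹) volume (-π) (u-ε) := by
    apply ContinuousOn.intervalIntegrable
    rw [uIcc_of_le (by linarith)]
    apply ContinuousOn.inv₀ (by fun_prop)
    rintro x ⟨_, a⟩; linarith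
  have i2 : IntervalIntegrable (fun x : ℝ => (x-u)⁻¹) volume (u+ε) π := by
    apply ContinuousOn.intervalIntegrable
    rw [uIcc_of_le (by linarith)]
    apply ContinuousOn.inv₀ (by fun_prop)
    rintro x ⟨a, _⟩; linarith
  have v1 : ∫ x in (-π)..(u-ε), (x-u)⁻¹ = Real.log (ε/(π+u)) := by
    rw [intervalIntegral.integral_comp_sub_right (fun x => x⁻¹), integral_inv_of_neg (by linarith) (by linarith)]
    congr 1
    rw [show u - ε - u = -ε by ring, show -π - u = -(π+u) by ring, neg_div_neg_eq]
  have v2 : ∫ x in (u+ε)..π, (x-u)⁻¹ = Real.log ((π-u)/ε) := by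
    rw [intervalIntegral.integral_comp_sub_right (fun x => x⁻¹), integral_inv_of_pos (by linarith) (by linarith)]
    congr 1
    rw [show u + ε - u = ε by ring]
  rw [intervalIntegrable_iff_integrableOn_Ioo_of_le (by linarith)] at i1 i2
  rw [hS]
  refine ⟨i1.union i2, ?_⟩
  rw [setIntegral_union hd measurableSet_Ioo i1 i2, ← integral_Ioc_eq_integral_Ioo, ← integral_Ioc_eq_integral_Ioo,
    ← intervalIntegral.integral_of_le (by linarith), ← intervalIntegral.integral_of_le (by linarith), v1, v2,
    Real.log_div (by linarith) (by linarith), Real.log_div (by linarith) (by linarith),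
    Real.log_div (by linarith) (by linarith)]
  ring

lemma aux_q_int (a : ℝ) (h0 : 0 < a) (h1 : a < 1) (u : ℝ) (hu : u ≠ 0) :
    IntegrableOn (fun x => (auxG a x - auxG a u)/(x-u)) (Ioo (-π) π) := by
  have hO := (aux_diffG a u hu).isBigO_sub
  obtain ⟨M, hM⟩ := hO.bound
  obtain ⟨η, hη, hb⟩ := Metric.eventually_nhds_iff.mp hM
  have hG := auxG_int a h0 h1
  have hc : ∀ c : ℝ, IntegrableOn (fun _ : ℝ => c) (Ioo (-π) π) := fun c => by simp
  refine Integrable.mono' (g := fun x => |M| + (|auxG a x| + |auxG a u|)/η)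
    ((hc _).add ((hG.abs.add (hc _)).div_const η)) ?_ ?_
  · exact (((auxG_meas a).sub_const _).div (measurable_id.sub_const u)).aestronglyMeasurable
  · refine Eventually.of_forall fun x => ?_
    rw [norm_div, Real.norm_eq_abs, Real.norm_eq_abs]
    have hnn : 0 ≤ (|auxG a x| + |auxG a u|)/η := by positivity
    rcases lt_or_ge |x-u| η with h | h
    · have := hb (show dist x u < η from h)
      rw [Real.norm_eq_abs, Real.norm_eq_abs] at this
      have h2 : |auxG a x - auxG a u| / |x-u| ≤ |M| := by
        apply div_le_of_le_mul₀ (abs_nonneg _) (abs_nonneg _)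
        exact this.trans (mul_le_mul_of_nonneg_right (le_abs_self M) (abs_nonneg _))
      linarith
    · have h2 : |auxG a x - auxG a u| / |x-u| ≤ (|auxG a x| + |auxG a u|)/η := by
        have := abs_sub (auxG a x) (auxG a u)
        gcongr
      linarith [abs_nonneg M]

lemma aux_pv_zero (a : ℝ) (h0 : 0 < a) (h1 : a < 1) (u : ℝ) (hu : u ≠ 0) (hu1 : |u| < 1) :
    pvInt (fun x => auxG a x / (x-u)) u =
      (∫ x in Ioo (-π) π, (auxG a x - auxG a u)/(x-u)) + auxG a u * Real.log ((π-u)/(π+u)) := by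
  have hq := aux_q_int a h0 h1 u hu
  have hT := (aux_pv_tendsto _ u hq).add_const (auxG a u * Real.log ((π-u)/(π+u)))
  refine Tendsto.limUnder_eq (hT.congr' ?_)
  filter_upwards [aux_log u hu1] with ε hε
  obtain ⟨hi, hv⟩ := hε
  have hq' := hq.mono_set (show {x : ℝ | x ∈ Set.Ioo (-π) π ∧ ε < |x - u|} ⊆ _ from fun x hx => hx.1)
  rw [← hv, ← integral_const_mul, ← integral_add hq' (hi.const_mul _)]
  congr 1
  ext x
  rw [sub_div]; ring

lemma aux_main_int (a : ℝ) (h0 : 0 < a) (h1 : a < 1) (u : ℝ) (hu : u ≠ 0) :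
    ∫ x in Ioo (-π) π, (auxG a x - auxG a u)/(x-u) =
      2*a*|u|^(a-1) * ∫ t in (0:ℝ)..(π/|u|), auxPhi a t := by
  have hv : 0 < |u| := abs_pos.mpr hu
  rw [aux_fold _ (aux_q_int a h0 h1 u hu)]
  have e1 : ∫ x in (0:ℝ)..π, ((auxG a x - auxG a u)/(x-u) + (auxG a (-x) - auxG a u)/(-x-u)) =
      ∫ x in (0:ℝ)..π, (2*a*|u|^(a-2)) * auxPhi a (|u|⁻¹ * x) := by
    refine intervalIntegral.integral_congr_ae ?_
    have hne : ∀ᵐ x : ℝ, x ≠ |u| := by simp [ae_iff, measure_singleton]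
    filter_upwards [hne] with x hx hx'
    rw [uIoc_of_le pi_pos.le] at hx'
    have hx0 : 0 < x := hx'.1
    have n1 : x - u ≠ 0 := by
      intro h; apply hx
      have : x = u := by linarith
      rw [← this, abs_of_pos hx0]
    have n2 : -x - u ≠ 0 := by
      intro h; apply hx
      have : u = -x := by linarith
      rw [this, abs_neg, abs_of_pos hx0]
    have n3 : x^2 - |u|^2 ≠ 0 := by
      rw [sq_abs]
      have : x^2 - u^2 = -((x-u)*(-x-u)) := by ring
      rw [this]; exact neg_ne_zero.mpr (mul_ne_zero n1 n2)
    have hxg := auxG_mul a h0 x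
    have hug := auxG_mul a h0 u
    rw [abs_of_pos hx0] at hxg
    have L : (auxG a x - auxG a u)/(x-u) + (auxG a (-x) - auxG a u)/(-x-u)
        = 2*a*(x^a - |u|^a)/(x^2-|u|^2) := by
      have : 2*a*(x^a - |u|^a) = 2*(x*auxG a x - u * auxG a u) := by rw [hxg, hug]; ring
      rw [this, auxG_neg, div_add_div _ _ n1 n2, div_eq_div_iff (mul_ne_zero n1 n2) n3, sq_abs]
      ring
    rw [L]
    unfold auxPhi
    rw [Real.mul_rpow (by positivity) hx0.le, Real.inv_rpow hv.le]
    have e : |u|^a = |u|^(a-2) * |u|^2 := by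
      rw [← Real.rpow_natCast |u| 2, ← Real.rpow_add hv]; norm_num
    have hpow : |u|^(a-2) ≠ 0 := (Real.rpow_pos_of_pos hv _).ne'
    have n4 : (|u|⁻¹ * x)^2 - 1 = (x^2-|u|^2)/|u|^2 := by field_simp
    rw [n4, e]
    field_simp
  rw [e1, intervalIntegral.integral_const_mul, intervalIntegral.integral_comp_mul_left _ (by positivity)]
  have e : |u|^(a-1) = |u|^(a-2) * |u| := by
    rw [← Real.rpow_add_one hv.ne']; ring_nf
  rw [e, inv_inv, smul_eq_mul, mul_zero, inv_mul_eq_div]; ring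

lemma aux_log_bound (u : ℝ) (hu : |u| < 1) : |Real.log ((π-u)/(π+u))| ≤ |u| := by
  have hp := pi_gt_three
  obtain ⟨u1, u2⟩ := abs_lt.mp hu
  have p1 : 0 < π - u := by linarith
  have p2 : 0 < π + u := by linarith
  have key : ∀ w : ℝ, |w| < 1 → Real.log ((π-w)/(π+w)) ≤ |w| := by
    intro w hw
    obtain ⟨w1, w2⟩ := abs_lt.mp hw
    have p1 : 0 < π - w := by linarith
    have p2 : 0 < π + w := by linarith
    refine (Real.log_le_sub_one_of_pos (div_pos p1 p2)).trans ?_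
    rw [sub_le_iff_le_add, div_le_iff₀ p2]
    rcases abs_cases w with ⟨h, _⟩ | ⟨h, _⟩ <;> rw [h] <;> nlinarith
  rw [abs_le]
  refine ⟨?_, key u hu⟩
  have := key (-u) (by rwa [abs_neg])
  rw [abs_neg, show (π - -u)/(π + -u) = ((π-u)/(π+u))⁻¹ by rw [inv_div]; ring_nf, Real.log_inv] at this
  linarith

lemma aux_term_zero (a : ℝ) (h0 : 0 < a) (h1 : a < 1) (u : ℝ) (hu : u ≠ 0) (hu1 : |u| < 1) :
    |pvInt (fun x => auxG a x / (x-u)) u - π * (a * Real.tan (π*(a/2)) * |u|^(a-1))| ≤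
      4*a*π^(a-1)/(1-a) + a := by
  have hp := pi_gt_three
  have hv : 0 < |u| := abs_pos.mpr hu
  rw [aux_pv_zero a h0 h1 u hu hu1, aux_main_int a h0 h1 u hu]
  have hT2 : 2 ≤ π/|u| := by rw [le_div_iff₀ hv]; linarith
  obtain ⟨t1, t2, t3⟩ := auxPhi_tail_int a h0 h1 (π/|u|) hT2
  have hi := auxPhi_int a h0 h1
  have hval := auxPhi_val a h0 h1
  have h0T : 0 ≤ π/|u| := by linarith
  rw [← Ioc_union_Ioi_eq_Ioi h0T, setIntegral_union (Ioc_disjoint_Ioi le_rfl) measurableSet_Ioi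
    (hi.mono_set Ioc_subset_Ioi_self) t1, ← intervalIntegral.integral_of_le h0T] at hval
  set X := ∫ t in (0:ℝ)..(π/|u|), auxPhi a t
  set R := ∫ t in Ioi (π/|u|), auxPhi a t
  have hX : X = π/2 * Real.tan (π*(a/2)) - R := by linarith
  have hlog : |auxG a u * Real.log ((π-u)/(π+u))| ≤ a := by
    rw [abs_mul, auxG_abs a h0 h1]
    have h2 : |u|^(a-1) * |u| ≤ 1 := by
      rw [← Real.rpow_add_one hv.ne', sub_add_cancel]
      exact Real.rpow_le_one hv.le hu1.le h0.le
    have h3 : 0 < |u|^(a-1) := Real.rpow_pos_of_pos hv _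
    calc a * |u|^(a-1) * |Real.log ((π-u)/(π+u))| ≤ a * |u|^(a-1) * |u| := by
          exact mul_le_mul_of_nonneg_left (aux_log_bound u hu1) (by positivity)
      _ = a * (|u|^(a-1) * |u|) := by ring
      _ ≤ a * 1 := by gcongr
      _ = a := mul_one a
  have htail : |2*a*|u|^(a-1)*R| ≤ 4*a*π^(a-1)/(1-a) := by
    have h3 : 0 < |u|^(a-1) := Real.rpow_pos_of_pos hv _
    rw [abs_of_nonneg (by positivity)]
    have h4 : |u|^(a-1) * (π/|u|)^(a-1) = π^(a-1) := by
      rw [← Real.mul_rpow hv.le h0T, mul_div_cancel₀ _ hv.ne']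
    calc 2*a*|u|^(a-1)*R ≤ 2*a*|u|^(a-1)*(2 * (π/|u|)^(a-1) / (1-a)) := by gcongr
      _ = 4*a*(|u|^(a-1) * (π/|u|)^(a-1))/(1-a) := by ring
      _ = _ := by rw [h4]
  rw [hX]
  have : 2*a*|u|^(a-1)*(π/2*Real.tan (π*(a/2)) - R) + auxG a u * Real.log ((π-u)/(π+u))
      - π * (a * Real.tan (π*(a/2)) * |u|^(a-1)) =
      auxG a u * Real.log ((π-u)/(π+u)) - 2*a*|u|^(a-1)*R := by ring
  rw [this]
  refine (abs_sub _ _).trans ?_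
  linarith

lemma aux_term_n (a : ℝ) (h0 : 0 < a) (h1 : a < 1) (u : ℝ) (hu1 : |u| < 1) (n : ℤ) (hn : n ≠ 0) :
    |pvInt (fun x => auxG a x / (x-u+2*π*(n:ℝ))) u| ≤ 2*a*π^a*π*(1/(n:ℝ)^2) := by
  have hp := pi_gt_three
  have hp2 := pi_lt_d2
  obtain ⟨u1, u2⟩ := abs_lt.mp hu1
  set c : ℝ := 2*π*(n:ℝ) - u with hc
  have hn1 : (1:ℝ) ≤ |(n:ℝ)| := by exact_mod_cast Int.one_le_abs hn
  have hcabs : 5*|(n:ℝ)| ≤ |c| := by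
    have : |2*π*(n:ℝ)| - |u| ≤ |c| := abs_sub_abs_le_abs_sub _ _
    rw [abs_mul, abs_of_pos (show 0 < 2*π by linarith)] at this
    nlinarith
  have hn2 : (1:ℝ) ≤ (n:ℝ)^2 := by rw [← sq_abs]; nlinarith
  have hc2 : 25*(n:ℝ)^2 ≤ c^2 := by
    rw [← sq_abs (n:ℝ), ← sq_abs c]; nlinarith [abs_nonneg (n:ℝ)]
  have hfar : ∀ x : ℝ, |x| ≤ π → 1 ≤ |x + c| := by
    intro x hx
    have : |c| - |-x| ≤ |c - (-x)| := abs_sub_abs_le_abs_sub _ _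
    rw [abs_neg, show c - (-x) = x + c by ring] at this
    linarith
  have hfun : (fun x => auxG a x / (x-u+2*π*(n:ℝ))) = fun x => auxG a x / (x + c) := by
    ext x; rw [hc]; ring_nf
  have hint : IntegrableOn (fun x => auxG a x / (x + c)) (Ioo (-π) π) := by
    refine Integrable.mono' (auxG_int a h0 h1).abs
      ((auxG_meas a).div (measurable_id.add_const c)).aestronglyMeasurable ?_
    refine (ae_restrict_iff' measurableSet_Ioo).mpr (Eventually.of_forall fun x hx => ?_)
    rw [norm_div, Real.norm_eq_abs, Real.norm_eq_abs]
    exact div_le_self (abs_nonneg _) (hfar x (abs_le.mpr ⟨hx.1.le, hx.2.le⟩))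
  have hpv : pvInt (fun x => auxG a x / (x-u+2*π*(n:ℝ))) u = ∫ x in Ioo (-π) π, auxG a x / (x + c) := by
    rw [hfun]; exact (aux_pv_tendsto _ u hint).limUnder_eq
  rw [hpv, aux_fold _ hint]
  have hb := intervalIntegral.norm_integral_le_of_norm_le_const (a := 0) (b := π)
    (f := fun x => auxG a x / (x + c) + auxG a (-x) / (-x + c)) (C := 2*a*π^a*(1/(n:ℝ)^2)) ?_
  · rw [sub_zero, abs_of_pos pi_pos, Real.norm_eq_abs] at hb
    linarith
  · intro x hx
    rw [uIoc_of_le pi_pos.le] at hx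
    obtain ⟨x0, x1⟩ := hx
    have n1 : x + c ≠ 0 := by
      have := hfar x (by rw [abs_of_pos x0]; exact x1)
      intro h; rw [h] at this; norm_num at this
    have n2 : -x + c ≠ 0 := by
      have := hfar (-x) (by rw [abs_neg, abs_of_pos x0]; exact x1)
      intro h; rw [h] at this; norm_num at this
    have hx2 : x^2 ≤ 10 := by nlinarith
    have n3 : (n:ℝ)^2 ≤ c^2 - x^2 := by linarith
    have hxg := auxG_mul a h0 x
    rw [abs_of_pos x0] at hxg
    have e : auxG a x / (x + c) + auxG a (-x) / (-x + c) = -(2*a*x^a/(c^2-x^2)) := by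
      have n4 : c^2 - x^2 ≠ 0 := by linarith
      have : 2*a*x^a = 2*(x*auxG a x) := by rw [hxg]; ring
      rw [this, auxG_neg, div_add_div _ _ n1 n2, ← neg_div, div_eq_div_iff (mul_ne_zero n1 n2) n4]
      ring
    rw [e, norm_neg, Real.norm_of_nonneg (div_nonneg (by positivity) (by linarith))]
    have hxa : x^a ≤ π^a := Real.rpow_le_rpow x0.le x1 h0.le
    calc 2*a*x^a/(c^2-x^2) ≤ 2*a*π^a/(n:ℝ)^2 := by gcongr
      _ = _ := by ring

/-- For `β ∈ (0,1/2)`, `K_∞ |u|^(2β) = -2β tan(πβ) |u|^(2β-1) + O(1)` as `u → 0`. -/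
theorem Kinf_abs_rpow_two_beta_small (β : ℝ) (hβ : β ∈ Set.Ioo (0:ℝ) (1/2)) :
    ∃ C : ℝ, 0 < C ∧ ∃ δ ∈ Set.Ioo (0:ℝ) π, ∀ u : ℝ, 0 < |u| → |u| < δ →
      |Kinf (perExt (fun x => |x| ^ (2*β))) u + 2*β * Real.tan (π * β) * |u| ^ (2*β - 1)| ≤ C := by
  obtain ⟨hb0, hb1⟩ := hβ
  have h0 : 0 < 2*β := by linarith
  have h1 : 2*β < 1 := by linarith
  have hβa : π * β = π * (2*β/2) := by ring
  rw [hβa]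
  generalize 2*β = a at *
  have hp := pi_gt_three
  have hsumZ : Summable (fun n : ℤ => 2*a*π^a*π*(1/(n:ℝ)^2)) :=
    (Real.summable_one_div_int_pow.mpr one_lt_two).mul_left _
  set B : ℝ := ∑' n : ℤ, 2*a*π^a*π*(1/(n:ℝ)^2) with hB
  have hB0 : 0 ≤ B := tsum_nonneg fun n => by positivity
  set A : ℝ := 4*a*π^(a-1)/(1-a) + a with hA
  have hA0 : 0 < A := by
    have : 0 < 1 - a := by linarith
    positivity
  refine ⟨1/π*(A+B), by positivity, 1, ⟨one_pos, by linarith⟩, fun u hu hu1 => ?_⟩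
  have hu0 : u ≠ 0 := abs_pos.mp hu
  set t : ℤ → ℝ := fun n => pvInt (fun x => auxG a x / (x-u+2*π*(n:ℝ))) u with ht
  have hK : Kinf (perExt (fun x => |x|^a)) u = -(1/π * ∑' n : ℤ, t n) := by
    unfold Kinf periodicHilbert
    congr 3
    ext n
    refine aux_pv_congr _ _ u fun x hx hx0 => ?_
    rw [aux_deriv a x hx hx0]
  have hbound : ∀ n : ℤ, ‖if n = 0 then 0 else t n‖ ≤ 2*a*π^a*π*(1/(n:ℝ)^2) := by
    intro n
    split_ifs with h
    · simp [h]
    · exact aux_term_n a h0 h1 u hu1 n h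
  have hts : Summable t := by
    have h2 : Summable (fun n : ℤ => if n = 0 then 0 else t n) := Summable.of_norm_bounded hsumZ hbound
    refine h2.congr_cofinite ?_
    filter_upwards [(Set.finite_singleton (0:ℤ)).compl_mem_cofinite] with n hn
    exact if_neg hn
  have hrest := tsum_of_norm_bounded hsumZ.hasSum hbound
  rw [← hB, Real.norm_eq_abs] at hrest
  have hz := aux_term_zero a h0 h1 u hu0 hu1
  have ht0 : t 0 = pvInt (fun x => auxG a x / (x-u)) u := by simp [ht]
  rw [← ht0, ← hA] at hz
  rw [hK, hts.tsum_eq_add_tsum_ite 0]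
  set R := ∑' n : ℤ, if n = 0 then 0 else t n
  have e : -(1/π * (t 0 + R)) + a * Real.tan (π*(a/2)) * |u|^(a-1) =
      -(1/π * ((t 0 - π * (a * Real.tan (π*(a/2)) * |u|^(a-1))) + R)) := by
    field_simp; ring
  rw [e, abs_neg, abs_mul, abs_of_pos (show 0 < 1/π by positivity)]
  gcongr
  exact (abs_add_le _ _).trans (add_le_add hz hrest)
end
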